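/- Let k be an algebraically closed field of characteristic zero and let G be a finite subgroup of GL(n,k), acting on kⁿ and dually on k[x₁,…,xₙ] by (g·f)(p) = f(g⁻¹·p). For points p, p′ ∈ kⁿ, the following are equivalent: (i) f(p) = f(p′) for every G-invariant polynomial f ∈ k[x₁,…,xₙ]^G; (ii) the orbits G·p and G·p′ coincide. In other words, the G-invariant polynomials separate exactly the G-orbits in kⁿ. -/

import Mathlib

/-!
A point `p ∈ kⁿ` is the same thing as a `k`-algebra homomorphism `k[x₁,…,xₙ] → k`, and such a
homomorphism is determined by its kernel, a prime ideal. If the invariants agree at `p` and `p'`,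
the two kernels lie over the same prime of `k[x₁,…,xₙ]^G`; since a finite group acts transitively
on the primes lying over a given prime of its ring of invariants, the kernels, and hence `p` and
`p'`, are conjugate under `G`.
-/

/-- The dual action of `g ∈ GL(n,k)` on polynomials: `(g · f)(p) = f(g⁻¹ · p)`, i.e. the
`k`-algebra endomorphism substituting `xᵢ ↦ Σⱼ (g⁻¹)ᵢⱼ xⱼ`. -/
noncomputable def glSubst {k : Type*} [Field k] {n : ℕ}
    (g : Matrix.GeneralLinearGroup (Fin n) k) :
    MvPolynomial (Fin n) k →ₐ[k] MvPolynomial (Fin n) k :=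
  MvPolynomial.aeval fun i =>
    ∑ j, MvPolynomial.C ((↑(g⁻¹) : Matrix (Fin n) (Fin n) k) i j) * MvPolynomial.X j

open Matrix MvPolynomial

open scoped Pointwise

theorem algHom_eq_of_ker_le {k B : Type*} [CommRing k] [Ring B] [Algebra k B] {φ ψ : B →ₐ[k] k}
    (h : RingHom.ker φ ≤ RingHom.ker ψ) : φ = ψ := by
  ext b
  have hb : b - algebraMap k B (φ b) ∈ RingHom.ker φ := by simp [RingHom.mem_ker]
  have hψ : ψ b - φ b = 0 := by simpa [RingHom.mem_ker] using h hb
  exact (sub_eq_zero.mp hψ).symm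

theorem ker_comp_toAlgHom {k B C G : Type*} [CommSemiring k] [Semiring B] [Algebra k B]
    [Semiring C] [Algebra k C] [Group G] [MulSemiringAction G B] [SMulCommClass G k B]
    (φ : B →ₐ[k] C) (g : G) :
    RingHom.ker (φ.comp (MulSemiringAction.toAlgHom k B g)) = g⁻¹ • RingHom.ker φ := by
  ext b
  simp [RingHom.mem_ker, Ideal.mem_inv_pointwise_smul_iff]

instance isInvariant_fixedPoints_subalgebra {k B G : Type*} [CommSemiring k] [CommSemiring B]
    [Algebra k B] [Group G] [MulSemiringAction G B] [SMulCommClass G k B] :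
    Algebra.IsInvariant (FixedPoints.subalgebra k B G) B G where
  isInvariant b hb := ⟨⟨b, hb⟩, rfl⟩

theorem eqOn_fixedPoints_iff_exists_eq_comp_toAlgHom {k B G : Type*} [CommRing k] [IsDomain k]
    [CommRing B] [Algebra k B] [Group G] [Finite G] [MulSemiringAction G B] [SMulCommClass G k B]
    (φ ψ : B →ₐ[k] k) :
    (∀ b ∈ FixedPoints.subalgebra k B G, φ b = ψ b) ↔
      ∃ g : G, φ = ψ.comp (MulSemiringAction.toAlgHom k B g) := by
  constructor
  · intro h
    have isPrime_ker_φ := RingHom.ker_isPrime φ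
    have isPrime_ker_ψ := RingHom.ker_isPrime ψ
    have ker_under_eq : (RingHom.ker ψ).under (FixedPoints.subalgebra k B G) =
        (RingHom.ker φ).under (FixedPoints.subalgebra k B G) := by
      ext a
      change ψ a = 0 ↔ φ a = 0
      rw [h a a.2]
    obtain ⟨g, hg⟩ := Algebra.IsInvariant.exists_smul_of_under_eq _ B G _ _ ker_under_eq
    refine ⟨g⁻¹, algHom_eq_of_ker_le ?_⟩
    rw [ker_comp_toAlgHom, inv_inv, hg]
  · rintro ⟨g, rfl⟩ b hb
    exact congrArg ψ (hb g)

theorem mvPolynomial_aeval_injective {R A σ : Type*} [CommSemiring R] [CommSemiring A]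
    [Algebra R A] :
    Function.Injective (aeval : (σ → A) → MvPolynomial σ R →ₐ[R] A) := fun p q h ↦ by
  ext i
  simpa using DFunLike.congr_fun h (X i)

theorem image_mulVec_eq_orbit {ι R : Type*} [Fintype ι] [DecidableEq ι] [CommRing R]
    (G : Subgroup (GL ι R)) (v : ι → R) :
    (fun g : GL ι R ↦ (g : Matrix ι ι R) *ᵥ v) '' (G : Set _) = MulAction.orbit G v :=
  Set.image_eq_range _ _

section LinearSubstitution

variable {k : Type*} [Field k] {n : ℕ}

theorem glSubst_eq_aeval (g : GL (Fin n) k) :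
    glSubst g = aeval ((↑g⁻¹ : Matrix (Fin n) (Fin n) k).map C *ᵥ X) :=
  rfl

theorem aeval_comp_glSubst {A : Type*} [CommSemiring A] [Algebra k A] (a : Fin n → A)
    (g : GL (Fin n) k) :
    (aeval a).comp (glSubst g) =
      aeval ((↑g⁻¹ : Matrix (Fin n) (Fin n) k).map (algebraMap k A) *ᵥ a) := by
  ext i
  simp [glSubst_eq_aeval, mulVec, dotProduct]

theorem glSubst_one : glSubst (1 : GL (Fin n) k) = AlgHom.id k _ := by
  rw [glSubst_eq_aeval, inv_one, Units.val_one, Matrix.map_one _ C_0 C_1, one_mulVec, aeval_X_left]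

theorem glSubst_mul (g h : GL (Fin n) k) : glSubst (g * h) = (glSubst g).comp (glSubst h) := by
  rw [glSubst_eq_aeval g, aeval_comp_glSubst, glSubst_eq_aeval, _root_.mul_inv_rev, Units.val_mul,
    Matrix.map_mul, mulVec_mulVec, algebraMap_eq]

/-- The dual action of `GL(n,k)` on polynomials, as an action by ring automorphisms. -/
noncomputable instance glSubstAction :
    MulSemiringAction (GL (Fin n) k) (MvPolynomial (Fin n) k) where
  smul g := glSubst g
  one_smul := DFunLike.congr_fun glSubst_one
  mul_smul g h := DFunLike.congr_fun (glSubst_mul g h)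
  smul_zero g := map_zero (glSubst g)
  smul_add g := map_add (glSubst g)
  smul_one g := map_one (glSubst g)
  smul_mul g := map_mul (glSubst g)

instance smulCommClass_glSubst : SMulCommClass (GL (Fin n) k) k (MvPolynomial (Fin n) k) where
  smul_comm g := map_smul (glSubst g)

theorem aeval_comp_toAlgHom (G : Subgroup (GL (Fin n) k)) (g : G) (p : Fin n → k) :
    (aeval p).comp (MulSemiringAction.toAlgHom k (MvPolynomial (Fin n) k) g) =
      aeval (g⁻¹ • p) := by
  have toAlgHom_eq : MulSemiringAction.toAlgHom k (MvPolynomial (Fin n) k) g =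
      glSubst (g : GL (Fin n) k) :=
    rfl
  rw [toAlgHom_eq, aeval_comp_glSubst, Algebra.algebraMap_self, RingHom.coe_id, Matrix.map_id]
  rfl

theorem mem_fixedPoints_subalgebra_iff {G : Subgroup (GL (Fin n) k)} {f : MvPolynomial (Fin n) k} :
    f ∈ FixedPoints.subalgebra k (MvPolynomial (Fin n) k) G ↔ ∀ g ∈ G, glSubst g f = f :=
  Subtype.forall

end LinearSubstitution

theorem statement3_general (k : Type*) [Field k] (n : ℕ)
    (G : Subgroup (Matrix.GeneralLinearGroup (Fin n) k)) [Finite G] (p p' : Fin n → k) :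
    (∀ f : MvPolynomial (Fin n) k, (∀ g ∈ G, glSubst g f = f) →
        MvPolynomial.eval p f = MvPolynomial.eval p' f) ↔
      (fun g : Matrix.GeneralLinearGroup (Fin n) k =>
          Matrix.mulVec (↑g : Matrix (Fin n) (Fin n) k) p) '' (G : Set _) =
        (fun g : Matrix.GeneralLinearGroup (Fin n) k =>
          Matrix.mulVec (↑g : Matrix (Fin n) (Fin n) k) p') '' (G : Set _) := by
  rw [image_mulVec_eq_orbit, image_mulVec_eq_orbit, eq_comm, MulAction.orbit_eq_iff]
  calc
    _ ↔ ∀ f ∈ FixedPoints.subalgebra k (MvPolynomial (Fin n) k) G, aeval p f = aeval p' f := by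
      simp only [mem_fixedPoints_subalgebra_iff, aeval_eq_eval]
    _ ↔ ∃ g : G, (aeval p : _ →ₐ[k] k) =
          (aeval p').comp (MulSemiringAction.toAlgHom k (MvPolynomial (Fin n) k) g) :=
      eqOn_fixedPoints_iff_exists_eq_comp_toAlgHom _ _
    _ ↔ ∃ g : G, g • p = p' := by
      simp only [aeval_comp_toAlgHom, mvPolynomial_aeval_injective.eq_iff, eq_inv_smul_iff]
    _ ↔ p' ∈ MulAction.orbit G p := Iff.rfl

/-- Invariant polynomials of a finite subgroup `G ⊆ GL(n,k)` separate exactly the `G`-orbits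
in `kⁿ`: for `p, p′ ∈ kⁿ`, every `G`-invariant polynomial takes the same value at `p` and `p′`
if and only if the orbits `G·p` and `G·p′` coincide.  Here `k` is algebraically closed of
characteristic zero. -/
theorem statement3 (k : Type*) [Field k] [IsAlgClosed k] [CharZero k] (n : ℕ)
    (G : Subgroup (Matrix.GeneralLinearGroup (Fin n) k)) [Finite G] (p p' : Fin n → k) :
    (∀ f : MvPolynomial (Fin n) k, (∀ g ∈ G, glSubst g f = f) →
        MvPolynomial.eval p f = MvPolynomial.eval p' f) ↔
      (fun g : Matrix.GeneralLinearGroup (Fin n) k =>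
          Matrix.mulVec (↑g : Matrix (Fin n) (Fin n) k) p) '' (G : Set _) =
        (fun g : Matrix.GeneralLinearGroup (Fin n) k =>
          Matrix.mulVec (↑g : Matrix (Fin n) (Fin n) k) p') '' (G : Set _) :=
  statement3_general k n G p p'
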